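/- For all integers b ≥ 3 and w ≥ 1, ∑_{n=0}^∞ (2n+1) ∏_{i=0}^{n-1} (w+i)/(b+w+i) − (∑_{n=0}^∞ ∏_{i=0}^{n-1} (w+i)/(b+w+i))² = bw(b+w-1)/((b-1)²(b-2)). Probabilistically: the waiting time T_{b,w} for the first black ball in a Pólya urn with b black and w white balls has variance Var(T_{b,w}) = bw(b+w-1)/((b-1)²(b-2)). -/

import Mathlib

/-!
Write `P b w n = P(T_{b,w} > n)`. Passing from `b` to `b + 1` multiplies this tail by a rational
factor, `(b + w + n) P (b + 1) w n = (b + w) P b w n`, which has two consequences.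

* The point probabilities are again tails: `P b w n - P b w (n + 1) = b / (b + w) * P (b + 1) w n`.
  As `P b w n → 0`, telescoping gives `∑ P (b + 1) w n = (b + w) / b`, the mean for `b + 1`.
* Multiplying `P (b + 1) w n` by `n` lowers `b + 1` to `b`, so that the second moment is a linear
  combination of the means for `b + 1` and `b`.
-/

open Filter Topology

theorem hasSum_sub_succ_of_antitone {f : ℕ → ℝ} {l : ℝ} (hf : Antitone f)
    (hl : Tendsto f atTop (𝓝 l)) : HasSum (fun n ↦ f n - f (n + 1)) (f 0 - l) := by
  rw [hasSum_iff_tendsto_nat_of_nonneg fun n ↦ sub_nonneg.2 (hf n.le_succ)]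
  simpa only [Finset.sum_range_sub'] using hl.const_sub (f 0)

theorem tendsto_prod_one_sub_zero_of_not_summable {x : ℕ → ℝ} (hx₀ : ∀ i, 0 ≤ x i)
    (hx₁ : ∀ i, x i ≤ 1) (hx : ¬Summable x) :
    Tendsto (fun n ↦ ∏ i ∈ Finset.range n, (1 - x i)) atTop (𝓝 0) := by
  have h_prod_nonneg (n : ℕ) : 0 ≤ ∏ i ∈ Finset.range n, (1 - x i) :=
    Finset.prod_nonneg fun i _ ↦ sub_nonneg.2 (hx₁ i)
  have h_prod_le_exp (n : ℕ) :
      ∏ i ∈ Finset.range n, (1 - x i) ≤ Real.exp (-∑ i ∈ Finset.range n, x i) := by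
    rw [← Finset.sum_neg_distrib, Real.exp_sum]
    exact Finset.prod_le_prod (fun i _ ↦ sub_nonneg.2 (hx₁ i))
      fun i _ ↦ Real.one_sub_le_exp_neg (x i)
  have h_sum := (not_summable_iff_tendsto_nat_atTop_of_nonneg hx₀).1 hx
  exact squeeze_zero h_prod_nonneg h_prod_le_exp (Real.tendsto_exp_neg_atTop_nhds_zero.comp h_sum)

/-- The tail probability `P(T_{b,w} > n)` of the waiting time for the first black ball in a Pólya
urn with `b` black and `w` white balls, with real parameters so that `b` and `w` may be
arbitrary masses. -/
noncomputable def polyaTail (b w : ℝ) (n : ℕ) : ℝ :=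
  ∏ i ∈ Finset.range n, ((w + i) / (b + w + i))

section polyaTail

variable {b w : ℝ}

@[simp]
theorem polyaTail_zero (b w : ℝ) : polyaTail b w 0 = 1 :=
  Finset.prod_range_zero _

theorem polyaTail_succ (b w : ℝ) (n : ℕ) :
    polyaTail b w (n + 1) = polyaTail b w n * ((w + n) / (b + w + n)) :=
  Finset.prod_range_succ _ n

theorem polyaTail_nonneg (hb : 0 ≤ b) (hw : 0 ≤ w) (n : ℕ) : 0 ≤ polyaTail b w n :=
  Finset.prod_nonneg fun i _ ↦ by positivity

theorem add_mul_polyaTail_add_one (h : 0 < b + w) (n : ℕ) :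
    (b + w + n) * polyaTail (b + 1) w n = (b + w) * polyaTail b w n := by
  induction n with
  | zero => simp
  | succ n ih =>
    have h_ne : b + w + n ≠ 0 := by positivity
    have h_ne_succ : b + 1 + w + n ≠ 0 := by linarith
    calc (b + w + (n + 1 : ℕ)) * polyaTail (b + 1) w (n + 1)
        = (b + w + n) * polyaTail (b + 1) w n * ((w + n) / (b + w + n)) := by
          rw [polyaTail_succ]
          push_cast
          field_simp
          ring
      _ = (b + w) * polyaTail b w (n + 1) := by rw [ih, polyaTail_succ, mul_assoc]

theorem polyaTail_sub_succ (h : 0 < b + w) (n : ℕ) :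
    polyaTail b w n - polyaTail b w (n + 1) = b / (b + w) * polyaTail (b + 1) w n := by
  have h_pos : 0 < b + w + n := by positivity
  have h_shift : polyaTail (b + 1) w n = (b + w) * polyaTail b w n / (b + w + n) := by
    rw [← add_mul_polyaTail_add_one h, mul_div_cancel_left₀ _ h_pos.ne']
  rw [polyaTail_succ, h_shift]
  field_simp
  ring

theorem antitone_polyaTail (hb : 0 < b) (hw : 0 ≤ w) : Antitone (polyaTail b w) := by
  refine antitone_nat_of_succ_le fun n ↦ sub_nonneg.1 ?_
  rw [polyaTail_sub_succ (by positivity)]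
  exact mul_nonneg (by positivity) (polyaTail_nonneg (by positivity) hw n)

theorem tendsto_polyaTail_zero (hb : 0 < b) (hw : 0 ≤ w) :
    Tendsto (polyaTail b w) atTop (𝓝 0) := by
  have h_pos (i : ℕ) : 0 < b + w + i := by positivity
  have h_factor (i : ℕ) : (w + i) / (b + w + i) = 1 - b / (b + w + i) := by
    have := h_pos i
    field_simp
    ring
  have h_diverges : ¬Summable fun i : ℕ ↦ b / (b + w + i) := by
    have h_harmonic := (Real.summable_one_div_nat_add_rpow (b + w) 1).not.2 (lt_irrefl 1)
    refine fun h ↦ h_harmonic ((h.mul_left b⁻¹).congr fun i ↦ ?_)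
    have := h_pos i
    rw [Real.rpow_one, add_comm (i : ℝ), abs_of_pos this]
    field_simp
  unfold polyaTail
  simp only [h_factor]
  refine tendsto_prod_one_sub_zero_of_not_summable (fun i ↦ by positivity) (fun i ↦ ?_) h_diverges
  rw [div_le_one (h_pos i)]
  linarith [i.cast_nonneg (α := ℝ)]

theorem hasSum_polyaTail (hb : 1 < b) (hw : 0 ≤ w) :
    HasSum (polyaTail b w) ((b + w - 1) / (b - 1)) := by
  obtain ⟨c, rfl⟩ : ∃ c, b = c + 1 := ⟨b - 1, by ring⟩
  have hc : 0 < c := by linarith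
  have h_telescope := hasSum_sub_succ_of_antitone (antitone_polyaTail hc hw)
    (tendsto_polyaTail_zero hc hw)
  simp only [polyaTail_sub_succ (add_pos_of_pos_of_nonneg hc hw), polyaTail_zero, sub_zero]
    at h_telescope
  have h_value : c / (c + w) * ((c + 1 + w - 1) / (c + 1 - 1)) = 1 := by
    rw [add_right_comm, add_sub_cancel_right, add_sub_cancel_right]
    field_simp
  rwa [← hasSum_mul_left_iff (a₂ := c / (c + w)) (by positivity), h_value]

theorem hasSum_two_mul_add_one_mul_polyaTail (hb : 2 < b) (hw : 0 ≤ w) :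
    HasSum (fun n : ℕ ↦ (2 * (n : ℝ) + 1) * polyaTail b w n)
      ((b + w - 1) * (b + 2 * w - 2) / ((b - 1) * (b - 2))) := by
  obtain ⟨c, rfl⟩ : ∃ c, b = c + 1 := ⟨b - 1, by ring⟩
  have hc : 1 < c := by linarith
  have h_shift (n : ℕ) : (2 * (n : ℝ) + 1) * polyaTail (c + 1) w n
      = 2 * (c + w) * polyaTail c w n - (2 * (c + w) - 1) * polyaTail (c + 1) w n := by
    linear_combination 2 * add_mul_polyaTail_add_one (b := c) (w := w) (by positivity) n
  have h_value : (c + 1 + w - 1) * (c + 1 + 2 * w - 2) / ((c + 1 - 1) * (c + 1 - 2))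
      = 2 * (c + w) * ((c + w - 1) / (c - 1))
        - (2 * (c + w) - 1) * ((c + 1 + w - 1) / (c + 1 - 1)) := by
    have h₁ : c + 1 - 1 ≠ 0 := by linarith
    have h₂ : c + 1 - 2 ≠ 0 := by linarith
    have h₃ : c - 1 ≠ 0 := by linarith
    field_simp
    ring
  simp only [h_shift, h_value]
  exact ((hasSum_polyaTail hc hw).mul_left _).sub
    ((hasSum_polyaTail (by linarith) hw).mul_left _)

end polyaTail

theorem polya_variance_general_general {b w : ℝ} (hb : 2 < b) (hw : 0 ≤ w) :
    (∑' n : ℕ, (2 * (n : ℝ) + 1) * polyaTail b w n) - (∑' n : ℕ, polyaTail b w n) ^ 2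
      = b * w * (b + w - 1) / ((b - 1) ^ 2 * (b - 2)) := by
  rw [(hasSum_two_mul_add_one_mul_polyaTail hb hw).tsum_eq,
    (hasSum_polyaTail (one_lt_two.trans hb) hw).tsum_eq]
  have h₁ : b - 1 ≠ 0 := by linarith
  have h₂ : b - 2 ≠ 0 := by linarith
  field_simp
  ring

/-- The waiting time `T_{b,w}` for the first black ball in a Pólya urn with `b ≥ 3` black
and `w ≥ 1` white balls has variance
`Var(T_{b,w}) = E[T_{b,w}²] - (E[T_{b,w}])² = bw(b+w-1)/((b-1)²(b-2))`, where
`E[T_{b,w}²] = ∑_{n=0}^∞ (2n+1) P(T_{b,w} > n)` and `E[T_{b,w}] = ∑_{n=0}^∞ P(T_{b,w} > n)`. -/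
theorem polya_variance_general (b w : ℕ) (hb : 3 ≤ b) (hw : 1 ≤ w) :
    (∑' n : ℕ,
        (2 * (n : ℝ) + 1) * ∏ i ∈ Finset.range n, (((w : ℝ) + i) / ((b : ℝ) + w + i)))
      - (∑' n : ℕ, ∏ i ∈ Finset.range n, (((w : ℝ) + i) / ((b : ℝ) + w + i))) ^ 2
      = (b : ℝ) * w * ((b : ℝ) + w - 1) / (((b : ℝ) - 1) ^ 2 * ((b : ℝ) - 2)) :=
  polya_variance_general_general (by exact_mod_cast hb) w.cast_nonneg
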